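/- Let X be an implicative-orthomodular algebra and F a deductive system of X. Define x ≡_F y iff there exists f ∈ X such that x ≤_Q f, y ≤_Q f, f→x ∈ F and f→y ∈ F. Then ≡_F is a congruence on X (an equivalence relation compatible with →, i.e., x ≡_F y and u ≡_F v imply x→u ≡_F y→v) and {x ∈ X | x ≡_F 1} = F. Conversely, if ≡ is any congruence on X, then {x ∈ X | x ≡ 1} is a deductive system of X. -/

import Mathlib

/-!
The key point is a description of `≡_F` free of the order: for a deductive system `F` of an IOM
algebra, `x ≡_F y` iff `a → x = b → y` for some `a, b ∈ F` (`InvBE.cong_iff`). One direction holds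
because `x ≤_Q f` forces `f = (f → x) → x` (`InvBE.eq_of_leQ`); for the other, `f = a → x` lies
above `x` by (IOM), and `a → (f → x) = f → f = 1` gives `f → x ∈ F`.

With this description, transitivity follows from exchange and `(a ⊙ b) → x = a → (b → x)`, and
compatibility in the second argument is exchange alone. For compatibility with `*`, put
`q = a → x = b → y`. Then (IOM) says `x* = (q → x) → q*` and `y* = (q → y) → q*`, so
`(q → y) → x* = (q → x) → y*` by exchange. Contraposition `x → u = u* → x*` then gives
compatibility in the first argument.
-/

/-- An involutive BE algebra `(X, →, 0, 1)`. -/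
structure InvBE (X : Type*) where
  imp : X → X → X
  one : X
  zero : X
  imp_self : ∀ x, imp x x = one
  imp_one : ∀ x, imp x one = one
  one_imp : ∀ x, imp one x = x
  exchange : ∀ x y z, imp x (imp y z) = imp y (imp x z)
  zero_imp : ∀ x, imp zero x = one
  imp_involutive : ∀ x, imp (imp x zero) zero = x

namespace InvBE

variable {X : Type*} (A : InvBE X)

/-- `x* := x → 0`. -/
def neg (x : X) : X := A.imp x A.zero

/-- `x ⊓ y := ((x* → y*) → y*)*`. -/
def inf (x y : X) : X := A.neg (A.imp (A.imp (A.neg x) (A.neg y)) (A.neg y))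

/-- `x ∪ y := (x → y) → y`. -/
def sup (x y : X) : X := A.imp (A.imp x y) y

/-- `x ⊙ y := (x → y*)*`. -/
def odot (x y : X) : X := A.neg (A.imp x (A.neg y))

/-- `x ⊕ y := (x* ⊙ y*)*`. -/
def oplus (x y : X) : X := A.neg (A.odot (A.neg x) (A.neg y))

/-- `x ≤_Q y` iff `x = x ⊓ y`. -/
def leQ (x y : X) : Prop := x = A.inf x y

/-- `x ≤ y` iff `x → y = 1`. -/
def le (x y : X) : Prop := A.imp x y = A.one

/-- (IOM): `x ⊓ (y → x) = x` for all `x, y`. -/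
def IOM : Prop := ∀ x y, A.inf x (A.imp y x) = x

/-- (QW): `x → ((x ⊓ y) ⊓ (z ⊓ x)) = (x → y) ⊓ (x → z)` for all `x, y, z`. -/
def QW : Prop :=
  ∀ x y z, A.imp x (A.inf (A.inf x y) (A.inf z x)) = A.inf (A.imp x y) (A.imp x z)

/-- A filter: nonempty, closed under `⊙`, upward closed for `≤_Q`. -/
def IsFilter (F : Set X) : Prop :=
  F.Nonempty ∧ (∀ x ∈ F, ∀ y ∈ F, A.odot x y ∈ F) ∧
    (∀ x ∈ F, ∀ y : X, A.leQ x y → y ∈ F)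

/-- A deductive system: contains `1` and is closed under modus ponens. -/
def IsDS (F : Set X) : Prop :=
  A.one ∈ F ∧ ∀ x y : X, x ∈ F → A.imp x y ∈ F → y ∈ F

/-- `pow x n` is the `⊙`-product of `n + 1` copies of `x`, i.e. `x^(n+1)`. -/
def pow (x : X) : ℕ → X
  | 0 => x
  | n + 1 => A.odot x (pow x n)

/-- A maximal filter: proper and not contained in any other proper filter. -/
def IsMaximalFilter (F : Set X) : Prop :=
  A.IsFilter F ∧ F ≠ Set.univ ∧
    ∀ G : Set X, A.IsFilter G → F ⊆ G → G ≠ Set.univ → G = F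

/-- A strongly maximal filter: for every `x ∉ F` there is `n ≥ 1` with `(xⁿ)* ∈ F`. -/
def IsStronglyMaximalFilter (F : Set X) : Prop :=
  A.IsFilter F ∧ ∀ x : X, x ∉ F → ∃ n : ℕ, A.neg (A.pow x n) ∈ F

/-- `x ≡_F y` iff there is `f` with `x, y ≤_Q f` and `f → x, f → y ∈ F`. -/
def cong (F : Set X) (x y : X) : Prop :=
  ∃ f : X, A.leQ x f ∧ A.leQ y f ∧ A.imp f x ∈ F ∧ A.imp f y ∈ F

end InvBE

namespace InvBE

variable {X : Type*} (A : InvBE X)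

theorem neg_neg' (x : X) : A.neg (A.neg x) = x := A.imp_involutive x

theorem imp_neg_comm (x y : X) : A.imp x (A.neg y) = A.imp y (A.neg x) :=
  A.exchange x y A.zero

theorem contrapositive (x y : X) : A.imp (A.neg x) (A.neg y) = A.imp y x := by
  rw [imp_neg_comm, neg_neg']

theorem odot_imp (a b x : X) : A.imp (A.odot a b) x = A.imp a (A.imp b x) := by
  rw [← A.contrapositive x, odot, neg_neg', A.exchange, contrapositive]

variable {A}

/-- (IOM) rewritten through `→` and `*` only. -/
theorem neg_eq (hA : A.IOM) (x a : X) :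
    A.imp (A.imp (A.imp a x) x) (A.neg (A.imp a x)) = A.neg x := by
  have h := congrArg A.neg (hA x a)
  rwa [inf, neg_neg', contrapositive] at h

theorem eq_of_leQ (hA : A.IOM) {x f : X} (h : A.leQ x f) : A.imp (A.imp f x) x = f := by
  have h1 : A.imp (A.imp f x) (A.neg f) = A.neg x := by
    have := congrArg A.neg h
    rw [inf, neg_neg', contrapositive] at this
    exact this.symm
  -- (IOM) at `f*` and `f → x`, where `(f → x) → f* = x*`.
  have h2 := hA (A.neg f) (A.imp f x)
  rw [h1, inf, neg_neg', neg_neg'] at h2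
  rw [← A.neg_neg' (A.imp (A.imp f x) x), h2, neg_neg']

theorem leQ_imp (hA : A.IOM) (x a : X) : A.leQ x (A.imp a x) := (hA x a).symm

theorem IsDS.imp_imp_mem {F : Set X} (hF : A.IsDS F) {a : X} (ha : a ∈ F) (x : X) :
    A.imp (A.imp a x) x ∈ F := by
  refine hF.2 a _ ha ?_
  rw [A.exchange, A.imp_self]
  exact hF.1

theorem IsDS.odot_mem {F : Set X} (hF : A.IsDS F) {a b : X} (ha : a ∈ F) (hb : b ∈ F) :
    A.odot a b ∈ F := by
  refine hF.2 b _ hb (hF.2 a _ ha ?_)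
  rw [← odot_imp, A.imp_self]
  exact hF.1

/-- Order-free description of `≡_F`. -/
theorem cong_iff (hA : A.IOM) {F : Set X} (hF : A.IsDS F) {x y : X} :
    A.cong F x y ↔ ∃ a ∈ F, ∃ b ∈ F, A.imp a x = A.imp b y := by
  constructor
  · rintro ⟨f, hx, hy, hfx, hfy⟩
    exact ⟨_, hfx, _, hfy, (eq_of_leQ hA hx).trans (eq_of_leQ hA hy).symm⟩
  · rintro ⟨a, ha, b, hb, h⟩
    refine ⟨A.imp a x, leQ_imp hA x a, ?_, hF.imp_imp_mem ha x, ?_⟩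
    · rw [h]; exact leQ_imp hA y b
    · rw [h]; exact hF.imp_imp_mem hb y

theorem cong_equivalence (hA : A.IOM) {F : Set X} (hF : A.IsDS F) :
    Equivalence (A.cong F) where
  refl x := (cong_iff hA hF).2 ⟨_, hF.1, _, hF.1, rfl⟩
  symm := fun ⟨f, hx, hy, hfx, hfy⟩ => ⟨f, hy, hx, hfy, hfx⟩
  trans {x y z} hxy hyz := by
    obtain ⟨a, ha, b, hb, h⟩ := (cong_iff hA hF).1 hxy
    obtain ⟨c, hc, d, hd, h'⟩ := (cong_iff hA hF).1 hyz
    refine (cong_iff hA hF).2 ⟨_, hF.odot_mem hc ha, _, hF.odot_mem hb hd, ?_⟩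
    rw [odot_imp, odot_imp, h, ← h', A.exchange]

theorem cong_imp_left (hA : A.IOM) {F : Set X} (hF : A.IsDS F) {u v : X} (x : X)
    (h : A.cong F u v) : A.cong F (A.imp x u) (A.imp x v) := by
  obtain ⟨a, ha, b, hb, h⟩ := (cong_iff hA hF).1 h
  refine (cong_iff hA hF).2 ⟨a, ha, b, hb, ?_⟩
  rw [A.exchange, h, A.exchange]

theorem cong_neg (hA : A.IOM) {F : Set X} (hF : A.IsDS F) {x y : X}
    (h : A.cong F x y) : A.cong F (A.neg x) (A.neg y) := by
  obtain ⟨a, ha, b, hb, h⟩ := (cong_iff hA hF).1 h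
  refine (cong_iff hA hF).2 ⟨_, hF.imp_imp_mem hb y, _, hF.imp_imp_mem ha x, ?_⟩
  rw [← neg_eq hA x a, ← neg_eq hA y b, h, A.exchange]

theorem cong_imp (hA : A.IOM) {F : Set X} (hF : A.IsDS F) {x y u v : X}
    (hxy : A.cong F x y) (huv : A.cong F u v) :
    A.cong F (A.imp x u) (A.imp y v) := by
  refine (cong_equivalence hA hF).trans (cong_imp_left hA hF x huv) ?_
  rw [← A.contrapositive v x, ← A.contrapositive v y]
  exact cong_imp_left hA hF _ (cong_neg hA hF hxy)

theorem cong_one_iff (hA : A.IOM) {F : Set X} (hF : A.IsDS F) {x : X} :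
    A.cong F x A.one ↔ x ∈ F := by
  rw [cong_iff hA hF]
  constructor
  · rintro ⟨a, ha, b, hb, h⟩
    refine hF.2 a x ha ?_
    rw [h, A.imp_one]
    exact hF.1
  · intro hx
    exact ⟨x, hx, A.one, hF.1, by rw [A.imp_self, A.imp_one]⟩

end InvBE

/-- For any deductive system `F` of an IOM algebra, `≡_F` is a congruence with
`{x | x ≡_F 1} = F`; conversely, for any congruence `≡`, the set `{x | x ≡ 1}`
is a deductive system. -/
theorem stmt_19 {X : Type*} (A : InvBE X) (hA : A.IOM) :
    (∀ F : Set X, A.IsDS F →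
      Equivalence (A.cong F) ∧
        (∀ x y u v : X,
          A.cong F x y → A.cong F u v → A.cong F (A.imp x u) (A.imp y v)) ∧
        {x : X | A.cong F x A.one} = F) ∧
    (∀ r : X → X → Prop, Equivalence r →
      (∀ x y u v : X, r x y → r u v → r (A.imp x u) (A.imp y v)) →
      A.IsDS {x : X | r x A.one}) := by
  refine ⟨fun F hF => ⟨InvBE.cong_equivalence hA hF,
    fun _ _ _ _ => InvBE.cong_imp hA hF, Set.ext fun _ => InvBE.cong_one_iff hA hF⟩, ?_⟩
  intro r hr hc
  refine ⟨hr.refl _, fun x y hx hxy => ?_⟩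
  -- `x → y` is equivalent to `1` by hypothesis and to `1 → y = y` by compatibility.
  have h : r (A.imp x y) (A.imp A.one y) := hc _ _ _ _ hx (hr.refl y)
  rw [A.one_imp] at h
  exact hr.trans (hr.symm h) hxy
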